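/- Let X_ρ be a modular space whose modular ρ satisfies the Δ₂-type condition with constant k > 0 (i.e., ρ(2x) ≤ k·ρ(x) for all x ∈ X_ρ), and let T : X_ρ → X_ρ satisfy ρ(Tx − Ty) ≤ c·ρ(x − y) for all x, y ∈ X_ρ, where c ∈ [0,1) and c·k < 1/2. Then for every x ∈ X_ρ, the sequence of Picard iterates {Tⁿx} is ρ-Cauchy. -/

import Mathlib

open Filter Topology ENNReal NNReal

variable {X : Type*} [AddCommGroup X] [Module ℝ X]

/-- A modular on a real vector space `X`. -/
def IsModular (ρ : X → ℝ≥0∞) : Prop :=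
  (∀ x : X, ρ x = 0 ↔ x = 0) ∧ (∀ x : X, ρ (-x) = ρ x) ∧
    (∀ x y : X, ∀ α β : ℝ, 0 ≤ α → 0 ≤ β → α + β = 1 →
      ρ (α • x + β • y) ≤ ρ x + ρ y)

/-- For `s ∈ (0,1]`, an `s`-convex modular on a real vector space `X`. -/
def IsSConvexModular (ρ : X → ℝ≥0∞) (s : ℝ) : Prop :=
  (∀ x : X, ρ x = 0 ↔ x = 0) ∧ (∀ x : X, ρ (-x) = ρ x) ∧
    (∀ x y : X, ∀ a b : ℝ, 0 ≤ a → 0 ≤ b → a ^ s + b ^ s = 1 →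
      ρ (a • x + b • y) ≤ ENNReal.ofReal (a ^ s) * ρ x + ENNReal.ofReal (b ^ s) * ρ y)

/-- The modular space `X_ρ = {x ∈ X : ρ(αx) → 0 as α → 0}`. -/
def modularSpace (ρ : X → ℝ≥0∞) : Set X :=
  {x : X | Tendsto (fun α : ℝ => ρ (α • x)) (𝓝 0) (𝓝 0)}

/-- `ρ`-convergence of a sequence to a point: `ρ(x_n − a) → 0`. -/
def RhoTendsto (ρ : X → ℝ≥0∞) (x : ℕ → X) (a : X) : Prop :=
  Tendsto (fun n => ρ (x n - a)) atTop (𝓝 0)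

/-- A sequence is `ρ`-Cauchy if `ρ(x_m − x_n) → 0` as `m, n → ∞`. -/
def RhoCauchy (ρ : X → ℝ≥0∞) (x : ℕ → X) : Prop :=
  Tendsto (fun p : ℕ × ℕ => ρ (x p.1 - x p.2)) (atTop ×ˢ atTop) (𝓝 0)

/-- `X_ρ` is `ρ`-complete if every `ρ`-Cauchy sequence in `X_ρ`
is `ρ`-convergent to a point of `X_ρ`. -/
def RhoComplete (ρ : X → ℝ≥0∞) : Prop :=
  ∀ x : ℕ → X, (∀ n, x n ∈ modularSpace ρ) → RhoCauchy ρ x →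
    ∃ a ∈ modularSpace ρ, RhoTendsto ρ x a

/-- The Fatou property of a modular. -/
def FatouProperty (ρ : X → ℝ≥0∞) : Prop :=
  ∀ (x y : ℕ → X) (a b : X), RhoTendsto ρ x a → RhoTendsto ρ y b →
    ρ (a - b) ≤ atTop.liminf (fun n => ρ (x n - y n))

/-- The `Δ₂`-type condition with constant `k`: `ρ(2x) ≤ k·ρ(x)` on `X_ρ`. -/
def Delta2Type (ρ : X → ℝ≥0∞) (k : ℝ≥0) : Prop :=
  ∀ x ∈ modularSpace ρ, ρ ((2 : ℝ) • x) ≤ (k : ℝ≥0∞) * ρ x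

/-- The `Δ₂`-condition: for sequences in `X_ρ`, `ρ(x_n) → 0` implies `ρ(2x_n) → 0`. -/
def Delta2Condition (ρ : X → ℝ≥0∞) : Prop :=
  ∀ x : ℕ → X, (∀ n, x n ∈ modularSpace ρ) →
    Tendsto (fun n => ρ (x n)) atTop (𝓝 0) →
      Tendsto (fun n => ρ ((2 : ℝ) • x n)) atTop (𝓝 0)

/-- The `F`-norm associated with a modular: `‖x‖_ρ = inf {t > 0 : ρ(x/t) ≤ t}`. -/
noncomputable def fnorm (ρ : X → ℝ≥0∞) (x : X) : ℝ :=
  sInf {t : ℝ | 0 < t ∧ ρ (t⁻¹ • x) ≤ ENNReal.ofReal t}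

theorem aux_sub (ρ : X → ℝ≥0∞) (hmod : IsModular ρ) (x y : X) :
    ρ (x - y) ≤ ρ ((2 : ℝ) • x) + ρ ((2 : ℝ) • y) := by
  obtain ⟨-, h2, h3⟩ := hmod
  have h := h3 ((2 : ℝ) • x) (-((2 : ℝ) • y)) (1/2) (1/2) (by norm_num) (by norm_num) (by norm_num)
  rw [h2] at h
  have e : (1/2 : ℝ) • ((2 : ℝ) • x) + (1/2 : ℝ) • (-((2 : ℝ) • y)) = x - y := by
    module
  rwa [e] at h

theorem aux_smul (ρ : X → ℝ≥0∞) (t : ℝ) (x : X) (hx : x ∈ modularSpace ρ) :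
    t • x ∈ modularSpace ρ := by
  have hx' : Tendsto (fun α : ℝ => ρ (α • x)) (𝓝 0) (𝓝 0) := hx
  have h : Tendsto (fun α : ℝ => α * t) (𝓝 0) (𝓝 0) := by
    have : Continuous (fun α : ℝ => α * t) := by fun_prop
    simpa using this.tendsto 0
  have := hx'.comp h
  show Tendsto (fun α : ℝ => ρ (α • (t • x))) (𝓝 0) (𝓝 0)
  simpa [Function.comp_def, smul_smul] using this

theorem aux_sub_mem (ρ : X → ℝ≥0∞) (hmod : IsModular ρ) (x y : X)
    (hx : x ∈ modularSpace ρ) (hy : y ∈ modularSpace ρ) : x - y ∈ modularSpace ρ := by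
  have h1 : Tendsto (fun α : ℝ => ρ (α • ((2 : ℝ) • x))) (𝓝 0) (𝓝 0) := aux_smul ρ 2 x hx
  have h2 : Tendsto (fun α : ℝ => ρ (α • ((2 : ℝ) • y))) (𝓝 0) (𝓝 0) := aux_smul ρ 2 y hy
  have h3 := h1.add h2
  rw [add_zero] at h3
  refine tendsto_of_tendsto_of_tendsto_of_le_of_le tendsto_const_nhds h3
    (fun _ => zero_le) (fun α => ?_)
  have := aux_sub ρ hmod (α • x) (α • y)
  rw [← smul_sub, smul_comm (2 : ℝ) α x, smul_comm (2 : ℝ) α y] at this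
  exact this

theorem aux_fin (ρ : X → ℝ≥0∞) (k : ℝ≥0) (hΔ : Delta2Type ρ k) (x : X)
    (hx : x ∈ modularSpace ρ) : ρ x ≠ ∞ := by
  have hx' : Tendsto (fun α : ℝ => ρ (α • x)) (𝓝 0) (𝓝 0) := hx
  have hp : Tendsto (fun n : ℕ => ((1/2 : ℝ)) ^ n) atTop (𝓝 0) :=
    tendsto_pow_atTop_nhds_zero_of_lt_one (by norm_num) (by norm_num)
  obtain ⟨n, hn⟩ := ((hx'.comp hp).eventually (gt_mem_nhds ENNReal.zero_lt_top)).exists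
  have key : ∀ n : ℕ, ρ x ≤ (k : ℝ≥0∞) ^ n * ρ (((1/2 : ℝ)) ^ n • x) := by
    intro n
    induction n with
    | zero => simp
    | succ n ih =>
      have h := hΔ _ (aux_smul ρ ((1/2 : ℝ) ^ (n+1)) x hx)
      have e : (2 : ℝ) • ((1/2 : ℝ) ^ (n+1) • x) = (1/2 : ℝ) ^ n • x := by
        rw [smul_smul]; congr 1; rw [pow_succ]; ring
      rw [e] at h
      calc ρ x ≤ _ := ih
        _ ≤ (k : ℝ≥0∞) ^ n * (k * ρ ((1/2 : ℝ) ^ (n+1) • x)) := by gcongr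
        _ = _ := by rw [pow_succ (k : ℝ≥0∞), mul_assoc]
  have hn' : ρ ((1/2 : ℝ) ^ n • x) < ∞ := hn
  exact ((key n).trans_lt (ENNReal.mul_lt_top (ENNReal.pow_lt_top ENNReal.coe_lt_top) hn')).ne

/-- Under the Δ₂-type condition with `c·k < 1/2`, Picard
iterates form a ρ-Cauchy sequence. -/
theorem picard_iterates_rhoCauchy (ρ : X → ℝ≥0∞) (hmod : IsModular ρ)
    (k : ℝ≥0) (hk : 0 < k) (hΔ : Delta2Type ρ k)
    (T : X → X) (hT : ∀ x ∈ modularSpace ρ, T x ∈ modularSpace ρ)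
    (c : ℝ≥0) (hc : c < 1) (hck : (c : ℝ) * k < 1 / 2)
    (hcontr : ∀ x ∈ modularSpace ρ, ∀ y ∈ modularSpace ρ,
      ρ (T x - T y) ≤ (c : ℝ≥0∞) * ρ (x - y)) :
    ∀ x ∈ modularSpace ρ, RhoCauchy ρ (fun n => T^[n] x) := by
  intro x hx
  have hit : ∀ n, T^[n] x ∈ modularSpace ρ := by
    intro n
    induction n with
    | zero => exact hx
    | succ n ih => rw [Function.iterate_succ_apply']; exact hT _ ih
  have h2 : (2 * c * k : ℝ≥0∞) ≤ 1 := by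
    have : 2 * c * k ≤ (1 : ℝ≥0) := by
      rw [← NNReal.coe_le_coe]; push_cast; linarith
    exact_mod_cast this
  set d := ρ (x - T x) with hd
  have hbd : ∀ m, ρ (T^[m] x - x) ≤ 2 * (k * d) := by
    intro m
    induction m with
    | zero => simp [(hmod.1 0).2 rfl]
    | succ m ih =>
      have h1 := aux_sub ρ hmod (T^[m+1] x - T x) (x - T x)
      rw [sub_sub_sub_cancel_right] at h1
      have h3 := hcontr _ (hit m) _ hx
      rw [← Function.iterate_succ_apply' T] at h3
      calc ρ (T^[m+1] x - x) ≤ _ := h1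
        _ ≤ k * ρ (T^[m+1] x - T x) + k * d :=
          add_le_add (hΔ _ (aux_sub_mem ρ hmod _ _ (hit _) (hT _ hx)))
            (hΔ _ (aux_sub_mem ρ hmod _ _ hx (hT _ hx)))
        _ ≤ k * (c * (2 * (k * d))) + k * d := by
          gcongr
          exact h3.trans (by gcongr)
        _ = (2 * c * k) * (k * d) + k * d := by ring
        _ ≤ 1 * (k * d) + k * d := by gcongr
        _ = 2 * (k * d) := by ring
  have hfin : 2 * ((k : ℝ≥0∞) * d) ≠ ∞ :=
    ENNReal.mul_ne_top (by simp) (ENNReal.mul_ne_top (by simp)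
      (aux_fin ρ k hΔ _ (aux_sub_mem ρ hmod _ _ hx (hT _ hx))))
  have hcn : ∀ n m, ρ (T^[n + m] x - T^[n] x) ≤ (c : ℝ≥0∞) ^ n * (2 * (k * d)) := by
    intro n m
    induction n with
    | zero => simpa using hbd m
    | succ n ih =>
      have h3 := hcontr _ (hit (n+m)) _ (hit n)
      rw [← Function.iterate_succ_apply' T, ← Function.iterate_succ_apply' T] at h3
      rw [show n + 1 + m = (n + m) + 1 by ring]
      calc _ ≤ _ := h3
        _ ≤ c * ((c : ℝ≥0∞) ^ n * (2 * (k * d))) := by gcongr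
        _ = _ := by ring
  have hlim : Tendsto (fun n : ℕ => (c : ℝ≥0∞) ^ n * (2 * (k * d))) atTop (𝓝 0) := by
    have h0 : Tendsto (fun n : ℕ => (c : ℝ≥0∞) ^ n) atTop (𝓝 0) :=
      ENNReal.tendsto_pow_atTop_nhds_zero_of_lt_one (by exact_mod_cast hc)
    have := ENNReal.Tendsto.mul_const h0 (Or.inr hfin)
    simpa using this
  have hs := (hlim.comp tendsto_fst).add (hlim.comp (tendsto_snd (f := (atTop : Filter ℕ))))
  rw [add_zero] at hs
  refine tendsto_of_tendsto_of_tendsto_of_le_of_le tendsto_const_nhds hs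
    (fun _ => zero_le) ?_
  rintro ⟨m, n⟩
  rcases le_total m n with h | h
  · obtain ⟨j, rfl⟩ := Nat.exists_eq_add_of_le h
    show ρ (T^[m] x - T^[m + j] x) ≤ _
    rw [← hmod.2.1, neg_sub]
    exact (hcn m j).trans le_self_add
  · obtain ⟨j, rfl⟩ := Nat.exists_eq_add_of_le h
    exact (hcn n j).trans le_add_self
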